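/- Let A be a C*-algebra and I an essential closed two-sided ideal of A. If I admits a faithful positive bounded trace, then so does A. (Consequently, I admits a faithful bounded trace if and only if its multiplier algebra M(I) does.) -/

import Mathlib

open scoped ComplexOrder

/-!
Let `u` run through an approximate unit of the ideal `J`. Extend `φ` to a bounded functional `Φ` on
`A` by Hahn-Banach and let `ψ a` be a weak-* limit point of `Φ (a u)`. Since `a u` lies in `J`, `ψ`
extends `φ` and satisfies `ψ a = lim ψ (a u)`, so that it is determined by its values on `J`. As `φ`
is tracial, elements of `J` can be moved cyclically past elements of `A` under `ψ`. Writing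
`u = z z*` this gives `ψ (a* a u) = φ ((a z)* (a z)) ≥ 0`, so `ψ` is positive; then
`ψ (a* a u) = ψ (a u a*) ≤ ψ (a a*)`, and in the limit `ψ (a* a) ≤ ψ (a a*)`, which is an
equality by symmetry. Finally `φ ((a x)* (a x)) = ψ (a x x* a*) ≤ ‖x x*‖ ψ (a a*)`, so
`ψ (a* a) = 0` forces `a J = 0` as soon as `φ` is faithful.
-/

open Filter Topology
open scoped CStarAlgebra

theorem exists_extension_along_linearIsometry {𝕜 E F : Type*} [RCLike 𝕜]
    [NormedAddCommGroup E] [NormedSpace 𝕜 E] [SeminormedAddCommGroup F] [NormedSpace 𝕜 F]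
    (i : E →ₗᵢ[𝕜] F) (f : StrongDual 𝕜 E) : ∃ g : StrongDual 𝕜 F, ∀ x, g (i x) = f x := by
  let e := i.equivRange.symm.toContinuousLinearEquiv
  obtain ⟨g, hg, -⟩ := exists_extension_norm_eq _ (f ∘L (e : LinearMap.range i.toLinearMap →L[𝕜] E))
  refine ⟨g, fun x => (hg (i.equivRange x)).trans ?_⟩
  simp [e]

theorem exists_tendsto_apply_of_eventually_norm_le {α 𝕜 E : Type*} [NontriviallyNormedField 𝕜]
    [ProperSpace 𝕜] [SeminormedAddCommGroup E] [NormedSpace 𝕜 E] {U : Ultrafilter α}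
    {f : α → StrongDual 𝕜 E} {C : ℝ} (hf : ∀ᶠ i in U, ‖f i‖ ≤ C) :
    ∃ g : StrongDual 𝕜 E, ∀ x, Tendsto (fun i => f i x) U (𝓝 (g x)) := by
  obtain ⟨g, -, hg⟩ := (WeakDual.isCompact_closedBall (0 : StrongDual 𝕜 E) C).ultrafilter_le_nhds
    (U.map fun i => StrongDual.toWeakDual (f i)) (by
      rw [le_principal_iff, Ultrafilter.coe_map, mem_map]
      filter_upwards [hf] with i hi
      simpa using hi)
  exact ⟨WeakDual.toStrongDual g, fun x =>
    (WeakDual.eval_continuous x).continuousAt.tendsto.comp hg⟩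

theorem map_mul_comm_of_map_star_mul_self {A E : Type*} [NonUnitalNonAssocRing A] [StarRing A]
    [Module ℂ A] [IsScalarTower ℂ A A] [SMulCommClass ℂ A A] [StarModule ℂ A] [AddCommGroup E]
    [Module ℂ E] (φ : A →ₗ[ℂ] E) (hφ : ∀ x, φ (star x * x) = φ (x * star x)) (x y : A) :
    φ (x * y) = φ (y * x) := by
  have polarized (z w : A) :
      φ (star z * w) + φ (star w * z) = φ (w * star z) + φ (z * star w) := by
    have h := hφ (z + w)
    simp only [star_add, add_mul, mul_add, map_add] at h
    linear_combination (norm := module) h - hφ z - hφ w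
  have h₁ := polarized (star x) y
  have h₂ := polarized (star x) (Complex.I • y)
  simp only [star_star, star_smul, Complex.star_def, Complex.conj_I, smul_mul_assoc,
    mul_smul_comm, map_smul] at h₁ h₂
  have h₃ := congrArg (-Complex.I • ·) h₂
  simp only [smul_add, smul_smul, mul_neg, neg_mul, Complex.I_mul_I, neg_neg] at h₃
  linear_combination (norm := module) (2⁻¹ : ℂ) • h₁ + (2⁻¹ : ℂ) • h₃

theorem map_star_right_conjugate_le_norm_mul {A : Type*} [NonUnitalCStarAlgebra A]
    (ψ : A →ₗ[ℂ] ℂ) (hψ : ∀ a, 0 ≤ ψ (star a * a)) (a : A) {b : A} (hb : IsSelfAdjoint b) :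
    ψ (a * b * star a) ≤ ‖b‖ * ψ (a * star a) := by
  let _ : PartialOrder A := CStarAlgebra.spectralOrder A
  have : StarOrderedRing A := CStarAlgebra.spectralOrderedRing A
  obtain ⟨c, hc⟩ := CStarAlgebra.nonneg_iff_eq_star_mul_self.mp <|
    sub_nonneg.mpr (CStarAlgebra.star_right_conjugate_le_norm_smul (a := a) hb)
  rw [← sub_nonneg]
  calc 0 ≤ ψ (star c * c) := hψ c
    _ = ‖b‖ * ψ (a * star a) - ψ (a * b * star a) := by
      rw [← hc, map_sub, ← Complex.coe_smul, map_smul, smul_eq_mul]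

theorem isIncreasingApproximateUnit_mono {A : Type*} [NonUnitalCStarAlgebra A] [PartialOrder A]
    {l l' : Filter A} [l'.NeBot] (hl : l.IsIncreasingApproximateUnit) (hle : l' ≤ l) :
    l'.IsIncreasingApproximateUnit where
  tendsto_mul_left x := (hl.tendsto_mul_left x).mono_left hle
  tendsto_mul_right x := (hl.tendsto_mul_right x).mono_left hle
  neBot := inferInstance
  eventually_nonneg := hle hl.eventually_nonneg
  eventually_norm := hle hl.eventually_norm

/-- A bounded positive trace: a continuous linear functional that is nonnegative on the elements
`star x * x` and does not depend on the order of the factors of a product. -/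
structure IsPositiveTrace {A : Type*} [NonUnitalSemiring A] [Star A] [Module ℂ A]
    [TopologicalSpace A] (φ : A →L[ℂ] ℂ) : Prop where
  nonneg (x : A) : 0 ≤ φ (star x * x)
  map_mul_comm (x y : A) : φ (x * y) = φ (y * x)

section Ideal

variable {A J : Type*} [NonUnitalCStarAlgebra A] [NonUnitalCStarAlgebra J] {ι : J →⋆ₙₐ[ℂ] A}
  {φ : J →L[ℂ] ℂ} {ψ : A →L[ℂ] ℂ}

theorem map_mul_comm_of_mem_ideal (hideal : ∀ a x, (∃ y, ι y = a * ι x) ∧ ∃ y, ι y = ι x * a)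
    (hext : ∀ x, ψ (ι x) = φ x) (hφ : ∀ x y, φ (x * y) = φ (y * x)) (a : A) (x : J) :
    ψ (a * ι x) = ψ (ι x * a) := by
  have comm_ideal (x y : J) : ψ (ι x * ι y) = ψ (ι y * ι x) := by
    simp only [← map_mul ι, hext, hφ x y]
  have comm_mul (x u : J) : ψ (a * ι (x * u)) = ψ (ι (x * u) * a) := by
    obtain ⟨y, hy⟩ := (hideal a x).1
    obtain ⟨z, hz⟩ := (hideal a u).2
    calc ψ (a * ι (x * u)) = ψ (ι y * ι u) := by rw [hy, map_mul ι, mul_assoc]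
      _ = ψ (ι u * ι y) := comm_ideal y u
      _ = ψ (ι z * ι x) := by rw [hy, hz, mul_assoc]
      _ = ψ (ι x * ι z) := comm_ideal z x
      _ = ψ (ι (x * u) * a) := by rw [hz, map_mul ι, mul_assoc]
  let _ : PartialOrder J := CStarAlgebra.spectralOrder J
  have : StarOrderedRing J := CStarAlgebra.spectralOrderedRing J
  have hlim := (CStarAlgebra.increasingApproximateUnit J).tendsto_mul_left x
  have hι : Continuous ι := map_continuous ι
  have hleft : Continuous fun v => ψ (a * ι v) := by fun_prop
  have hright : Continuous fun v => ψ (ι v * a) := by fun_prop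
  exact tendsto_nhds_unique ((hleft.tendsto x).comp hlim) <|
    ((hright.tendsto x).comp hlim).congr fun u => (comm_mul x u).symm

theorem map_mul_mul_comm_of_mem_ideal
    (hideal : ∀ a x, (∃ y, ι y = a * ι x) ∧ ∃ y, ι y = ι x * a)
    (hext : ∀ x, ψ (ι x) = φ x) (hφ : ∀ x y, φ (x * y) = φ (y * x)) (a b : A) (x : J) :
    ψ (a * ι x * b) = ψ (b * a * ι x) := by
  obtain ⟨y, hy⟩ := (hideal a x).1
  rw [mul_assoc b, ← hy, map_mul_comm_of_mem_ideal hideal hext hφ]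

theorem mul_eq_zero_of_map_star_mul_self_eq_zero (hleft : ∀ a x, ∃ y, ι y = a * ι x)
    (hext : ∀ x, ψ (ι x) = φ x) (hψ : IsPositiveTrace ψ)
    (hfaith : ∀ x, φ (star x * x) = 0 → x = 0) {a : A} (ha : ψ (star a * a) = 0) (x : J) :
    a * ι x = 0 := by
  obtain ⟨y, hy⟩ := hleft a x
  have hle : ψ (star (ι y) * ι y) ≤ 0 :=
    calc ψ (star (ι y) * ι y) = ψ (a * (ι x * star (ι x)) * star a) := by
          rw [hψ.map_mul_comm, hy, star_mul]
          simp only [mul_assoc]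
      _ ≤ ‖ι x * star (ι x)‖ * ψ (a * star a) :=
        map_star_right_conjugate_le_norm_mul (ψ : A →ₗ[ℂ] ℂ) hψ.nonneg a (.mul_star_self _)
      _ = 0 := by rw [hψ.map_mul_comm, ha, mul_zero]
  have hy₀ : φ (star y * y) = 0 := by
    rw [← hext, map_mul, map_star]
    exact hle.antisymm (hψ.nonneg _)
  rw [← hy, hfaith y hy₀, map_zero]

/-- `ψ` extends `φ` along `ι : J → A` and is recovered from `φ` as `ψ a = lim ψ (a * u)`, where
`u` runs through the filter `l` on the ideal `J`, in practice an approximate unit. -/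
structure IsExtensionAlong {A J : Type*} [NonUnitalCStarAlgebra A] [NonUnitalCStarAlgebra J]
    (ι : J →⋆ₙₐ[ℂ] A) (φ : J →L[ℂ] ℂ) (l : Filter J) (ψ : A →L[ℂ] ℂ) : Prop where
  map_ideal (x : J) : ψ (ι x) = φ x
  tendsto_mul (a : A) : Tendsto (fun u => ψ (a * ι u)) l (𝓝 (ψ a))

variable [PartialOrder J] [StarOrderedRing J]

theorem exists_isExtensionAlong (hiso : Isometry ι) (hleft : ∀ a x, ∃ y, ι y = a * ι x)
    (φ : J →L[ℂ] ℂ) :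
    ∃ l : Filter J, l.IsIncreasingApproximateUnit ∧ ∃ ψ, IsExtensionAlong ι φ l ψ := by
  let i : J →ₗᵢ[ℂ] A := ⟨(ι : J →ₗ[ℂ] A), hiso.norm_map_of_map_zero (map_zero ι)⟩
  obtain ⟨Φ, hΦ⟩ : ∃ Φ : StrongDual ℂ A, ∀ x, Φ (ι x) = φ x :=
    exists_extension_along_linearIsometry i φ
  let U : Ultrafilter J := Ultrafilter.of (CStarAlgebra.approximateUnit J)
  have hU : (U : Filter J).IsIncreasingApproximateUnit :=
    isIncreasingApproximateUnit_mono (CStarAlgebra.increasingApproximateUnit J)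
      (Ultrafilter.of_le _)
  let f (u : J) : StrongDual ℂ A := Φ ∘L (ContinuousLinearMap.mul ℂ A).flip (ι u)
  have hf : ∀ᶠ u in (U : Filter J), ‖f u‖ ≤ ‖Φ‖ := by
    filter_upwards [hU.eventually_norm] with u hu
    refine (f u).opNorm_le_bound (norm_nonneg _) fun a => ?_
    calc ‖Φ (a * ι u)‖ ≤ ‖Φ‖ * (‖a‖ * ‖ι u‖) := Φ.le_opNorm_of_le (norm_mul_le _ _)
      _ ≤ ‖Φ‖ * (‖a‖ * 1) := by grw [NonUnitalStarAlgHom.norm_apply_le ι u, hu]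
      _ = ‖Φ‖ * ‖a‖ := by rw [mul_one]
  obtain ⟨ψ, hψ⟩ := exists_tendsto_apply_of_eventually_norm_le hf
  have map_ideal (x : J) : ψ (ι x) = φ x := by
    refine tendsto_nhds_unique (hψ (ι x)) <|
      ((φ.continuous.tendsto x).comp (hU.tendsto_mul_left x)).congr fun u => ?_
    calc φ (x * u) = Φ (ι (x * u)) := (hΦ _).symm
      _ = Φ (ι x * ι u) := by rw [map_mul ι]
  refine ⟨U, hU, ψ, map_ideal, fun a => (hψ a).congr fun u => ?_⟩
  obtain ⟨y, hy⟩ := hleft a u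
  calc Φ (a * ι u) = φ y := by rw [← hy, hΦ]
    _ = ψ (a * ι u) := by rw [← hy, map_ideal]

namespace IsExtensionAlong

variable {l : Filter J}

theorem nonneg (h : IsExtensionAlong ι φ l ψ) (hl : l.IsIncreasingApproximateUnit)
    (hideal : ∀ a x, (∃ y, ι y = a * ι x) ∧ ∃ y, ι y = ι x * a) (hφ : IsPositiveTrace φ)
    (a : A) : 0 ≤ ψ (star a * a) := by
  have := hl.neBot
  refine ge_of_tendsto (h.tendsto_mul (star a * a)) ?_
  filter_upwards [hl.eventually_nonneg] with u hu
  obtain ⟨z, rfl⟩ := CStarAlgebra.nonneg_iff_eq_mul_star_self.mp hu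
  obtain ⟨y, hy⟩ := (hideal a z).1
  calc 0 ≤ φ (star y * y) := hφ.nonneg y
    _ = ψ (ι (star z) * (star a * a * ι z)) := by
      simp only [← h.map_ideal, map_mul, map_star, hy, star_mul, mul_assoc]
    _ = ψ (star a * a * ι z * ι (star z)) :=
      (map_mul_comm_of_mem_ideal hideal h.map_ideal hφ.map_mul_comm _ _).symm
    _ = ψ (star a * a * ι (z * star z)) := by rw [map_mul ι, mul_assoc _ (ι z)]

theorem map_star_mul_self_le (h : IsExtensionAlong ι φ l ψ) (hl : l.IsIncreasingApproximateUnit)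
    (hideal : ∀ a x, (∃ y, ι y = a * ι x) ∧ ∃ y, ι y = ι x * a) (hφ : IsPositiveTrace φ)
    (a : A) : ψ (star a * a) ≤ ψ (a * star a) := by
  have := hl.neBot
  have hψ := h.nonneg hl hideal hφ
  refine le_of_tendsto (h.tendsto_mul (star a * a)) ?_
  filter_upwards [hl.eventually_isSelfAdjoint, hl.eventually_norm] with u hu hu₁
  have hιu : ‖ι u‖ ≤ 1 := (NonUnitalStarAlgHom.norm_apply_le ι u).trans hu₁
  calc ψ (star a * a * ι u) = ψ (a * ι u * star a) :=
        map_mul_mul_comm_of_mem_ideal hideal h.map_ideal hφ.map_mul_comm a (star a) u |>.symm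
    _ ≤ ‖ι u‖ * ψ (a * star a) :=
      map_star_right_conjugate_le_norm_mul (ψ : A →ₗ[ℂ] ℂ) hψ a (hu.map ι)
    _ ≤ ψ (a * star a) :=
      mul_le_of_le_one_left (by simpa using hψ (star a)) (by exact_mod_cast hιu)

theorem isPositiveTrace (h : IsExtensionAlong ι φ l ψ) (hl : l.IsIncreasingApproximateUnit)
    (hideal : ∀ a x, (∃ y, ι y = a * ι x) ∧ ∃ y, ι y = ι x * a) (hφ : IsPositiveTrace φ) :
    IsPositiveTrace ψ where
  nonneg := h.nonneg hl hideal hφ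
  map_mul_comm := map_mul_comm_of_map_star_mul_self (ψ : A →ₗ[ℂ] ℂ) fun a =>
    (h.map_star_mul_self_le hl hideal hφ a).antisymm <| by
      simpa using h.map_star_mul_self_le hl hideal hφ (star a)

end IsExtensionAlong

end Ideal

/-- Proposition 6.6 (iii), first part.  `J` is a C*-algebra isometrically embedded via `ι` as
an *essential* closed two-sided ideal of the C*-algebra `A`.  If `J` admits a faithful
positive bounded trace, then so does `A`. -/
theorem faithful_trace_of_essential_ideal {A J : Type*}
    [NonUnitalCStarAlgebra A] [NonUnitalCStarAlgebra J]
    (ι : J →⋆ₙₐ[ℂ] A) (hiso : Isometry ι)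
    (hideal : ∀ (a : A) (x : J), (∃ y : J, ι y = a * ι x) ∧ (∃ y : J, ι y = ι x * a))
    (hess : ∀ a : A, (∀ x : J, a * ι x = 0) → a = 0)
    (φ : J →L[ℂ] ℂ)
    (hpos : ∀ x : J, 0 ≤ φ (star x * x))
    (htr : ∀ x : J, φ (star x * x) = φ (x * star x))
    (hfaith : ∀ x : J, φ (star x * x) = 0 → x = 0) :
    ∃ ψ : A →L[ℂ] ℂ, (∀ a : A, 0 ≤ ψ (star a * a)) ∧
      (∀ a : A, ψ (star a * a) = ψ (a * star a)) ∧
      ∀ a : A, ψ (star a * a) = 0 → a = 0 := by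
  let _ : PartialOrder J := CStarAlgebra.spectralOrder J
  have : StarOrderedRing J := CStarAlgebra.spectralOrderedRing J
  have hleft (a : A) (x : J) : ∃ y, ι y = a * ι x := (hideal a x).1
  have hφ : IsPositiveTrace φ := ⟨hpos, map_mul_comm_of_map_star_mul_self (φ : J →ₗ[ℂ] ℂ) htr⟩
  obtain ⟨l, hl, ψ, h⟩ := exists_isExtensionAlong hiso hleft φ
  have hψ : IsPositiveTrace ψ := h.isPositiveTrace hl hideal hφ
  exact ⟨ψ, hψ.nonneg, fun a => hψ.map_mul_comm _ _, fun a ha =>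
    hess a (mul_eq_zero_of_map_star_mul_self_eq_zero hleft h.map_ideal hψ hfaith ha)⟩
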